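/- Averaged thinness of boundary shells: Let ω be a locally finite positive Borel measure on ℝⁿ, let R and J be cubes with comparable side lengths (2^{−ρ}ℓ(R) ≤ ℓ(J) ≤ 2^{ρ}ℓ(R)) and J ⊂ 3R, let λ ∈ (0,1/2), and let J′ be a dyadic child of J. Then, averaging over the translation parameterization of dyadic grids, 𝔼_Ω ω( R ∩ [ (J+γ)′ ∖ (J+γ)_λ ] ) ≤ C_ρ λ ω(R), where C_ρ depends only on n and ρ. -/

import Mathlib

open MeasureTheory Set Filter Topology
open scoped ENNReal NNReal Classical

noncomputable section

/-- Euclidean space `ℝⁿ`. -/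
abbrev Pt (n : ℕ) : Type := EuclideanSpace ℝ (Fin n)

/-- An axis-parallel half-open cube in `ℝⁿ`, given by its corner `c` and positive
side length `l`. -/
structure Cube (n : ℕ) : Type where
  c : Pt n
  l : ℝ
  lpos : 0 < l

namespace Cube

variable {n : ℕ}

/-- The underlying (half-open) set of the cube. -/
def set (Q : Cube n) : Set (Pt n) := {x | ∀ i, Q.c i ≤ x i ∧ x i < Q.c i + Q.l}

/-- The center of the cube. -/
def center (Q : Cube n) : Pt n := WithLp.toLp 2 (fun i => Q.c i + Q.l / 2)

/-- The concentric triple `3Q`. -/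
def tri (Q : Cube n) : Cube n := ⟨WithLp.toLp 2 (fun i => Q.c i - Q.l), 3 * Q.l, by have := Q.lpos; linarith⟩

/-- The dyadic child of a cube indexed by `e : Fin n → Bool`. -/
def child (Q : Cube n) (e : Fin n → Bool) : Cube n :=
  ⟨WithLp.toLp 2 (fun i => Q.c i + (if e i then Q.l / 2 else 0)), Q.l / 2, by have := Q.lpos; linarith⟩

/-- The translate `Q + γ` of a cube. -/
def trans (Q : Cube n) (γ : Pt n) : Cube n := ⟨WithLp.toLp 2 (fun i => Q.c i + γ i), Q.l, Q.lpos⟩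

/-- The `λ`-interior `Q_λ = {x ∈ Q : dist(x,∂Q) > λ ℓ(Q)}` of a cube. -/
def inn (Q : Cube n) (lam : ℝ) : Set (Pt n) :=
  {x ∈ Q.set | lam * Q.l < Metric.infDist x (frontier Q.set)}

end Cube

/-- The distance between two sets, as an extended nonnegative real. -/
def sDistE {n : ℕ} (s t : Set (Pt n)) : ℝ≥0∞ := ⨅ (x ∈ s) (y ∈ t), edist x y

/-- Side lengths comparable within a factor `Cc` : `1/Cc ≤ ℓ(Q)/ℓ(Q') ≤ Cc`. -/
def sideComp {n : ℕ} (Cc : ℝ) (Q Q' : Cube n) : Prop := Q.l ≤ Cc * Q'.l ∧ Q'.l ≤ Cc * Q.l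

/-- Two cubes touch if their closures intersect, and the intersection is contained in
the boundary of the larger cube. -/
def Touching {n : ℕ} (Q R : Cube n) : Prop :=
  (closure Q.set ∩ closure R.set).Nonempty ∧
  (Q.l ≤ R.l → closure Q.set ∩ closure R.set ⊆ frontier R.set) ∧
  (R.l ≤ Q.l → closure Q.set ∩ closure R.set ⊆ frontier Q.set)

/-- The indicator function of a set. -/
def indic {n : ℕ} (s : Set (Pt n)) : Pt n → ℝ := s.indicator 1

/-- A standard `α`-fractional Calderón–Zygmund kernel in `ℝⁿ`: size and smoothness of
order `1 + δ`, for the kernel and its adjoint. -/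
structure CZKernel (n : ℕ) (α : ℝ) : Type where
  K : Pt n → Pt n → ℝ
  C₀ : ℝ
  Cpos : 0 < C₀
  δ : ℝ
  δpos : 0 < δ
  size : ∀ x y : Pt n, x ≠ y → |K x y| ≤ C₀ * ‖x - y‖ ^ (α - n)
  gradSize : ∀ x y : Pt n, x ≠ y →
    ‖fderiv ℝ (fun z => K z y) x‖ ≤ C₀ * ‖x - y‖ ^ (α - n - 1)
  gradHolder : ∀ x x' y : Pt n, x ≠ y → ‖x - x'‖ ≤ ‖x - y‖ / 2 →
    ‖fderiv ℝ (fun z => K z y) x - fderiv ℝ (fun z => K z y) x'‖ ≤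
      C₀ * (‖x - x'‖ / ‖x - y‖) ^ δ * ‖x - y‖ ^ (α - n - 1)
  gradSizeAdj : ∀ x y : Pt n, x ≠ y →
    ‖fderiv ℝ (fun z => K x z) y‖ ≤ C₀ * ‖x - y‖ ^ (α - n - 1)
  gradHolderAdj : ∀ x y y' : Pt n, x ≠ y → ‖y - y'‖ ≤ ‖x - y‖ / 2 →
    ‖fderiv ℝ (fun z => K x z) y - fderiv ℝ (fun z => K x z) y'‖ ≤
      C₀ * (‖y - y'‖ / ‖x - y‖) ^ δ * ‖x - y‖ ^ (α - n - 1)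

/-- A (tangent line type) truncation of a CZ kernel: a bounded kernel, vanishing on the
diagonal, compactly supported, agreeing with `K` in the annulus `d ≤ |x-y| ≤ r`. -/
structure Truncation {n : ℕ} {α : ℝ} (K : CZKernel n α) : Type where
  Kt : Pt n → Pt n → ℝ
  d : ℝ
  r : ℝ
  dpos : 0 < d
  dlt : d < r
  bounded : ∃ M, ∀ x y, |Kt x y| ≤ M
  diag : ∀ x, Kt x x = 0
  agrees : ∀ x y : Pt n, d ≤ ‖x - y‖ → ‖x - y‖ ≤ r → Kt x y = K.K x y
  compactsupp : ∃ S, ∀ x y : Pt n, S ≤ ‖x - y‖ → Kt x y = 0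

/-- The truncated operator `T^α_μ f (x) = ∫ K_t(x,y) f(y) dμ(y)`. -/
def Truncation.op {n : ℕ} {α : ℝ} {K : CZKernel n α} (τ : Truncation K)
    (μ : Measure (Pt n)) (f : Pt n → ℝ) (x : Pt n) : ℝ := ∫ y, τ.Kt x y * f y ∂μ

/-- The truncated dual operator `(T^α)^*_μ g (x) = ∫ K_t(y,x) g(y) dμ(y)`. -/
def Truncation.opAdj {n : ℕ} {α : ℝ} {K : CZKernel n α} (τ : Truncation K)
    (μ : Measure (Pt n)) (g : Pt n → ℝ) (x : Pt n) : ℝ := ∫ y, τ.Kt y x * g y ∂μ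

/-- The two-weight norm constant `𝔑_{T^α}(σ,ω)`, uniform over all truncations. -/
def normConst {n : ℕ} {α : ℝ} (K : CZKernel n α) (σ ω : Measure (Pt n)) : ℝ≥0∞ :=
  sInf {N : ℝ≥0∞ | ∀ τ : Truncation K, ∀ f : Pt n → ℝ,
    ∫⁻ x, ENNReal.ofReal ((τ.op σ f x) ^ 2) ∂ω ≤ N ^ 2 * ∫⁻ x, ENNReal.ofReal ((f x) ^ 2) ∂σ}

/-- The (quasi)cube `Ω Q` associated to a cube `Q` and a globally biLipschitz map `Ω`;
for ordinary cubes take `Ω = id`. -/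
def qset {n : ℕ} (Om : Pt n → Pt n) (Q : Cube n) : Set (Pt n) := Om '' Q.set

/-- The (quasi)cube testing constant `𝔗_{T^α}(σ,ω)`, uniform over all truncations. -/
def testConst {n : ℕ} {α : ℝ} (Om : Pt n → Pt n) (K : CZKernel n α)
    (σ ω : Measure (Pt n)) : ℝ≥0∞ :=
  sInf {T : ℝ≥0∞ | ∀ τ : Truncation K, ∀ Q : Cube n,
    ∫⁻ x in qset Om Q, ENNReal.ofReal ((τ.op σ (indic (qset Om Q)) x) ^ 2) ∂ω ≤
      T ^ 2 * σ (qset Om Q)}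

/-- The dual (quasi)cube testing constant `𝔗^*_{T^α}(σ,ω)`. -/
def testConstDual {n : ℕ} {α : ℝ} (Om : Pt n → Pt n) (K : CZKernel n α)
    (σ ω : Measure (Pt n)) : ℝ≥0∞ :=
  sInf {T : ℝ≥0∞ | ∀ τ : Truncation K, ∀ Q : Cube n,
    ∫⁻ x in qset Om Q, ENNReal.ofReal ((τ.opAdj ω (indic (qset Om Q)) x) ^ 2) ∂σ ≤
      T ^ 2 * ω (qset Om Q)}

/-- The weak boundedness constant `𝒲ℬ𝒫_{T^α}(σ,ω)` with comparability constant `Cc`. -/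
def wbpConst {n : ℕ} {α : ℝ} (K : CZKernel n α) (Cc : ℝ) (σ ω : Measure (Pt n)) : ℝ≥0∞ :=
  sInf {W : ℝ≥0∞ | ∀ τ : Truncation K, ∀ Q Q' : Cube n, sideComp Cc Q Q' →
    (Q.set ⊆ Q'.tri.set \ Q'.set ∨ Q'.set ⊆ Q.tri.set \ Q.set) →
    ENNReal.ofReal |∫ x in Q.set, τ.op σ (indic Q'.set) x ∂ω| ≤
      W * (ω Q.set) ^ (1/2 : ℝ) * (σ Q'.set) ^ (1/2 : ℝ)}

/-- The indicator/touching constant `𝔍_{T^α}(σ,ω)` with comparability constant `Cc`. -/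
def indTouchConst {n : ℕ} {α : ℝ} (K : CZKernel n α) (Cc : ℝ) (σ ω : Measure (Pt n)) : ℝ≥0∞ :=
  sInf {Jc : ℝ≥0∞ | ∀ τ : Truncation K, ∀ Q Q' : Cube n, Touching Q Q' → sideComp Cc Q Q' →
    (Q.set ⊆ Q'.tri.set \ Q'.set ∨ Q'.set ⊆ Q.tri.set \ Q.set) →
    ENNReal.ofReal |∫ x in Q'.set, τ.op σ (indic Q.set) x ∂ω| ≤
      Jc * (σ Q.set) ^ (1/2 : ℝ) * (ω Q'.set) ^ (1/2 : ℝ)}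

/-- The reproducing Poisson integral `𝒫^α(ΩQ, μ)`. -/
def repPoisson {n : ℕ} (α : ℝ) (Om : Pt n → Pt n) (Q : Cube n) (μ : Measure (Pt n)) : ℝ≥0∞ :=
  ∫⁻ x, ENNReal.ofReal ((Q.l / (Q.l + ‖x - Om Q.center‖) ^ 2) ^ ((n : ℝ) - α)) ∂μ

/-- The standard Poisson integral `P^α(ΩQ, μ)`. -/
def stdPoisson {n : ℕ} (α : ℝ) (Om : Pt n → Pt n) (Q : Cube n) (μ : Measure (Pt n)) : ℝ≥0∞ :=
  ∫⁻ x, ENNReal.ofReal (Q.l / (Q.l + ‖x - Om Q.center‖) ^ ((n : ℝ) + 1 - α)) ∂μ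

/-- The one-tailed Muckenhoupt constant `𝒜₂^α(σ,ω)`. -/
def a2tail {n : ℕ} (α : ℝ) (Om : Pt n → Pt n) (σ ω : Measure (Pt n)) : ℝ≥0∞ :=
  ⨆ Q : Cube n, repPoisson α Om Q (σ.restrict (qset Om Q)ᶜ) * ω (qset Om Q) /
    ENNReal.ofReal (Q.l ^ ((n : ℝ) - α))

/-- The set of common point masses of `σ` and `ω`. -/
def commonAtoms {n : ℕ} (σ ω : Measure (Pt n)) : Set (Pt n) := {p | 0 < σ {p} ∧ 0 < ω {p}}

/-- The punctured mass `ω(Q, 𝔓_{(σ,ω)})`. -/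
def punctMass {n : ℕ} (σ ω : Measure (Pt n)) (Om : Pt n → Pt n) (Q : Cube n) : ℝ≥0∞ :=
  ω (qset Om Q) - ⨆ p ∈ qset Om Q ∩ commonAtoms σ ω, ω {p}

/-- The punctured Muckenhoupt constant `A₂^{α,punct}(σ,ω)`. -/
def a2punct {n : ℕ} (α : ℝ) (Om : Pt n → Pt n) (σ ω : Measure (Pt n)) : ℝ≥0∞ :=
  ⨆ Q : Cube n, (punctMass σ ω Om Q / ENNReal.ofReal (Q.l ^ ((n : ℝ) - α))) *
    (σ (qset Om Q) / ENNReal.ofReal (Q.l ^ ((n : ℝ) - α)))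

/-- The full Muckenhoupt constant `𝔄₂^α = 𝒜₂^α + 𝒜₂^{α,*} + A₂^{α,punct} + A₂^{α,*,punct}`. -/
def muckA2 {n : ℕ} (α : ℝ) (Om : Pt n → Pt n) (σ ω : Measure (Pt n)) : ℝ≥0∞ :=
  a2tail α Om σ ω + a2tail α Om ω σ + a2punct α Om σ ω + a2punct α Om ω σ

/-- The dyadic cube of the grid translated by `t`, of scale `k` and position `m`. -/
def dCube {n : ℕ} (t : Pt n) (k : ℤ) (m : Fin n → ℤ) : Cube n :=
  ⟨WithLp.toLp 2 (fun i => t i + (2:ℝ) ^ k * m i), (2:ℝ) ^ k, by positivity⟩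

/-- The dyadic grid with origin `t`. -/
def gridCubes {n : ℕ} (t : Pt n) : Set (Cube n) := {Q | ∃ k m, Q = dCube t k m}

/-- Alternate dyadic cubes: unions of `2ⁿ` grid cubes of half the side length. -/
def altCubes {n : ℕ} (t : Pt n) : Set (Cube n) :=
  {Q | ∃ (k : ℤ) (m : Fin n → ℤ), Q.l = (2:ℝ) ^ k ∧ ∀ i, Q.c i = t i + (2:ℝ) ^ (k - 1) * m i}

/-- The `μ`-average of `f` over `s`. -/
def cubeAvg {n : ℕ} (μ : Measure (Pt n)) (s : Set (Pt n)) (f : Pt n → ℝ) : ℝ :=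
  (∫ x in s, f x ∂μ) / (μ s).toReal

/-- The martingale (Haar) difference `Δ_Q^μ f`. -/
def haarDiff {n : ℕ} (μ : Measure (Pt n)) (Q : Cube n) (f : Pt n → ℝ) (x : Pt n) : ℝ :=
  ∑ e : Fin n → Bool,
    Set.indicator (Q.child e).set (fun _ => cubeAvg μ (Q.child e).set f - cubeAvg μ Q.set f) x

/-- `J` is `(r,ε)`-deeply embedded in `K`. -/
def deepEmb {n : ℕ} (r : ℕ) (ε : ℝ) (J K : Cube n) : Prop :=
  J.set ⊆ K.set ∧ (2:ℝ) ^ r * J.l ≤ K.l ∧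
    ENNReal.ofReal (J.l ^ ε * K.l ^ (1 - ε) / 2) ≤ sDistE J.set (frontier K.set)

/-- The maximal `(r,ε)`-deeply embedded dyadic subcubes of `K` from the grid `t`. -/
def maxDeep {n : ℕ} (r : ℕ) (ε : ℝ) (t : Pt n) (K : Cube n) : Set (Cube n) :=
  {J | J ∈ gridCubes t ∧ deepEmb r ε J K ∧
    ∀ J' ∈ gridCubes t, J.set ⊆ J'.set → deepEmb r ε J' K → J' = J}

/-- The grid children of a (possibly alternate) cube `K`. -/
def gridChildren {n : ℕ} (t : Pt n) (K : Cube n) : Set (Cube n) :=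
  {K' | K' ∈ gridCubes t ∧ K'.l = K.l / 2 ∧ K'.set ⊆ K.set}

/-- `P = π^ℓ K'` is the `ℓ`-fold grid ancestor of `K'`. -/
def gridAncestor {n : ℕ} (t : Pt n) (lev : ℕ) (K' P : Cube n) : Prop :=
  P ∈ gridCubes t ∧ P.l = (2:ℝ) ^ lev * K'.l ∧ K'.set ⊆ P.set

/-- The refinement `M^ℓ_{(r,ε)-deep,𝒟}(K)` of the maximal deeply embedded collection. -/
def maxDeepRef {n : ℕ} (r : ℕ) (ε : ℝ) (t : Pt n) (lev : ℕ) (K : Cube n) : Set (Cube n) :=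
  {J | (∃ K' ∈ gridChildren t K, ∃ P : Cube n, gridAncestor t lev K' P ∧ J ∈ maxDeep r ε t P) ∧
       ∃ L ∈ maxDeep r ε t K, J.set ⊆ L.set}

/-- The `ω`-average (barycenter) of the identity over the quasicube `Ω J`. -/
def cubeAvgVec {n : ℕ} (Om : Pt n → Pt n) (ω : Measure (Pt n)) (J : Cube n) : Pt n :=
  ((ω (qset Om J)).toReal)⁻¹ • ∫ x in qset Om J, x ∂ω

/-- The energy `‖P^ω_{ΩJ} x‖²_{L²(ω)} = ∫_{ΩJ} |x - E_{ΩJ}^ω x|² dω`. -/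
def energyTerm {n : ℕ} (Om : Pt n → Pt n) (ω : Measure (Pt n)) (J : Cube n) : ℝ≥0∞ :=
  ∫⁻ x in qset Om J, ENNReal.ofReal (‖x - cubeAvgVec Om ω J‖ ^ 2) ∂ω

/-- The energy sum `Σ_{J ∈ 𝒥} (P^α(J, 1_I σ)/ℓ(J))² ‖P_J^ω x‖²`. -/
def energySum {n : ℕ} (α : ℝ) (Om : Pt n → Pt n) (σ ω : Measure (Pt n)) (I : Cube n)
    (𝒥 : Set (Cube n)) : ℝ≥0∞ :=
  ∑' J : 𝒥, (stdPoisson α Om (J : Cube n) (σ.restrict (qset Om I)) /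
      ENNReal.ofReal ((J : Cube n).l)) ^ 2 * energyTerm Om ω (J : Cube n)

/-- `Ir` is a partition of `I` into dyadic subcubes from the grid `t`. -/
def isGridPartition {n : ℕ} (t : Pt n) (I : Cube n) (Ir : ℕ → Cube n) : Prop :=
  (∀ k, Ir k ∈ gridCubes t) ∧ (∀ k, (Ir k).set ⊆ I.set) ∧
  (∀ k k', k ≠ k' → Disjoint (Ir k).set (Ir k').set) ∧ (⋃ k, (Ir k).set) = I.set

/-- The strong energy constant `ℰ_α^{strong}(σ,ω)` with goodness parameters `r, ε`. -/
def strongEnergy {n : ℕ} (r : ℕ) (ε α : ℝ) (Om : Pt n → Pt n) (σ ω : Measure (Pt n)) : ℝ≥0∞ :=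
  sInf {E : ℝ≥0∞ |
    (∀ (t : Pt n) (I : Cube n), I ∈ gridCubes t → ∀ Ir : ℕ → Cube n, isGridPartition t I Ir →
      (∑' k : ℕ, energySum α Om σ ω I (maxDeep r ε t (Ir k))) ≤ E ^ 2 * σ (qset Om I)) ∧
    (∀ (t : Pt n) (I : Cube n), I ∈ altCubes t → ∀ lev : ℕ,
      energySum α Om σ ω I (maxDeepRef r ε t lev I) ≤ E ^ 2 * σ (qset Om I))}

/-- The translation `γ` of step `2^{-M}` indexed by `idx`. -/
def gamOf {n : ℕ} (M : ℕ) {Kc : ℕ} (idx : Fin n → Fin Kc) : Pt n :=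
  WithLp.toLp 2 (fun i => (idx i : ℝ) * (2:ℝ) ^ (-(M : ℤ)))

/-- The truncated dyadic grid built on `𝔻_M`, of size `2^{-N}`, translated by `γ`. -/
def truncGrid {n : ℕ} (M : ℕ) (N : ℤ) (γ : Pt n) : Set (Cube n) :=
  {Q | ∃ (k : ℤ) (m : Fin n → ℤ), -(M : ℤ) ≤ k ∧ k ≤ -N ∧ Q = dCube γ k m}

/-- The siblings of `Q`: the `3ⁿ` triadic children of `3Q`. -/
def siblings {n : ℕ} (Q : Cube n) : Set (Cube n) :=
  {Q' | ∃ a : Fin n → Fin 3, Q'.l = Q.l ∧ ∀ i, Q'.c i = Q.c i + ((a i : ℝ) - 1) * Q.l}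

/-- A grid `𝒟` is `Q`-good for the goodness parameters `r, ε`. -/
def QGoodGrid {n : ℕ} (r : ℕ) (ε : ℝ) (Q : Cube n) (𝒟 : Set (Cube n)) : Prop :=
  ∀ Q' ∈ siblings Q, ∀ I ∈ 𝒟, (2:ℝ) ^ r * Q.l ≤ I.l →
    ENNReal.ofReal (Q'.l ^ ε * I.l ^ (1 - ε) / 2) ≤ sDistE Q'.set (frontier I.set)

/-- A cube `I` is `r`-good in the grid `𝒟`. -/
def rGoodIn {n : ℕ} (r : ℕ) (ε : ℝ) (I : Cube n) (𝒟 : Set (Cube n)) : Prop :=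
  ∀ K ∈ 𝒟, (2:ℝ) ^ r * I.l ≤ K.l →
    ENNReal.ofReal (I.l ^ ε * K.l ^ (1 - ε) / 2) ≤ sDistE I.set (frontier K.set)

/-- The good projection `P^μ_{Q;good} f` relative to the grid `𝒟`. -/
def projGood {n : ℕ} (r : ℕ) (ε : ℝ) (Q : Cube n) (𝒟 : Set (Cube n)) (μ : Measure (Pt n))
    (f : Pt n → ℝ) (x : Pt n) : ℝ :=
  if QGoodGrid r ε Q 𝒟 then
    ∑' I : {I : Cube n // I ∈ 𝒟 ∧ rGoodIn r ε I 𝒟}, haarDiff μ (I : Cube n) f x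
  else 0

/-- The bad projection `P^μ_{Q;bad} f = f - P^μ_{Q;good} f`. -/
def projBad {n : ℕ} (r : ℕ) (ε : ℝ) (Q : Cube n) (𝒟 : Set (Cube n)) (μ : Measure (Pt n))
    (f : Pt n → ℝ) (x : Pt n) : ℝ := f x - projGood r ε Q 𝒟 μ f x

/-- An 'appropriate' function: supported in a cube `L` with mean zero, with `−N > ℓ(L) + r`,
and constant on the tiles of `𝔻_M`. -/
def Appropriate {n : ℕ} (μ : Measure (Pt n)) (M : ℕ) (N : ℤ) (r : ℕ) (f : Pt n → ℝ) : Prop :=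
  ∃ L : Cube n, (∀ x, x ∉ L.set → f x = 0) ∧ (∫ x in L.set, f x ∂μ) = 0 ∧
    L.l + (r : ℝ) < (-N : ℝ) ∧
    ∀ m : Fin n → ℤ, ∀ x ∈ (dCube 0 (-(M : ℤ)) m).set, ∀ y ∈ (dCube 0 (-(M : ℤ)) m).set, f x = f y

/-- Pairs `(I,J)` of grid cubes with `J ⊂ 3I` and `ρ`-comparable side lengths. -/
def pairsNear {n : ℕ} (t : Pt n) (ρ : ℕ) : Set (Cube n × Cube n) :=
  {p | p.1 ∈ gridCubes t ∧ p.2 ∈ gridCubes t ∧ p.2.set ⊆ p.1.tri.set ∧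
       (2:ℝ) ^ (-(ρ:ℤ)) * p.1.l ≤ p.2.l ∧ p.2.l ≤ (2:ℝ) ^ (ρ:ℤ) * p.1.l}

/-- Pairs `(I,J)` of grid cubes with `I ⊂ 3J` and `ρ`-comparable side lengths. -/
def pairsNear' {n : ℕ} (t : Pt n) (ρ : ℕ) : Set (Cube n × Cube n) :=
  {p | p.1 ∈ gridCubes t ∧ p.2 ∈ gridCubes t ∧ p.1.set ⊆ p.2.tri.set ∧
       (2:ℝ) ^ (-(ρ:ℤ)) * p.1.l ≤ p.2.l ∧ p.2.l ≤ (2:ℝ) ^ (ρ:ℤ) * p.1.l}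

/-- The inner product `⟨T^α_σ Δ_I^σ f, Δ_J^ω g⟩_ω`. -/
def innerTT {n : ℕ} {α : ℝ} {K : CZKernel n α} (τ : Truncation K) (σ ω : Measure (Pt n))
    (I J : Cube n) (f g : Pt n → ℝ) : ℝ :=
  ∫ x, τ.op σ (haarDiff σ I f) x * haarDiff ω J g x ∂ω

/-- The form `A₁(f,g)`, summing over comparable nearby pairs with `J ⊂ 3I`. -/
def formA1 {n : ℕ} {α : ℝ} {K : CZKernel n α} (τ : Truncation K) (σ ω : Measure (Pt n))
    (t : Pt n) (ρ : ℕ) (f g : Pt n → ℝ) : ℝ :=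
  ∑' p : pairsNear t ρ, innerTT τ σ ω p.1.1 p.1.2 f g

/-- The form `A₂(f,g)`, summing over comparable nearby pairs with `I ⊂ 3J`. -/
def formA2 {n : ℕ} {α : ℝ} {K : CZKernel n α} (τ : Truncation K) (σ ω : Measure (Pt n))
    (t : Pt n) (ρ : ℕ) (f g : Pt n → ℝ) : ℝ :=
  ∑' p : pairsNear' t ρ, innerTT τ σ ω p.1.1 p.1.2 f g

/-- `I` and `J` are `r`-close in the grid `t`: comparable side lengths, touching,
and one contained in the triple of the other. -/
def rClosePairs {n : ℕ} (t : Pt n) (r : ℕ) : Set (Cube n × Cube n) :=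
  {p | p.1 ∈ gridCubes t ∧ p.2 ∈ gridCubes t ∧
       (2:ℝ) ^ (-(r:ℤ)) * p.1.l ≤ p.2.l ∧ p.2.l ≤ (2:ℝ) ^ (r:ℤ) * p.1.l ∧
       Touching p.1 p.2 ∧ (p.1.set ⊆ p.2.tri.set ∨ p.2.set ⊆ p.1.tri.set)}

/-- The bilinear form `ℬ(f,g) = ⟨T_σ^α f, g⟩_ω`. -/
def formB {n : ℕ} {α : ℝ} {K : CZKernel n α} (τ : Truncation K) (σ ω : Measure (Pt n))
    (f g : Pt n → ℝ) : ℝ := ∫ x, τ.op σ f x * g x ∂ω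

/-- The bilinear form `𝒞_𝒟(f,g)`, summing over `r`-close pairs in the grid. -/
def formC {n : ℕ} {α : ℝ} {K : CZKernel n α} (τ : Truncation K) (σ ω : Measure (Pt n))
    (t : Pt n) (r : ℕ) (f g : Pt n → ℝ) : ℝ :=
  ∑' p : rClosePairs t r, innerTT τ σ ω p.1.1 p.1.2 f g

/-- The subbilinear form `𝒮_𝒟(f,g)`, summing absolute values over `r`-close pairs. -/
def formS {n : ℕ} {α : ℝ} {K : CZKernel n α} (τ : Truncation K) (σ ω : Measure (Pt n))
    (t : Pt n) (r : ℕ) (f g : Pt n → ℝ) : ℝ≥0∞ :=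
  ∑' p : rClosePairs t r, ENNReal.ofReal |innerTT τ σ ω p.1.1 p.1.2 f g|

/-- Two cubes are `ρ`-close: `ρ`-comparable side lengths, in a common grid, touching, and
one contained in the triple of the other. -/
def rhoClose {n : ℕ} (ρ : ℕ) (Q R : Cube n) : Prop :=
  (2:ℝ) ^ (-(ρ:ℤ)) * Q.l ≤ R.l ∧ R.l ≤ (2:ℝ) ^ (ρ:ℤ) * Q.l ∧
  (∃ t : Pt n, Q ∈ gridCubes t ∧ R ∈ gridCubes t) ∧
  Touching Q R ∧ (Q.set ⊆ R.tri.set ∨ R.set ⊆ Q.tri.set)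

/-!
For a fixed point `x`, the shell of width `λ ℓ(J)` of `J + γ` contains `x` only if some coordinate
of `γ` lies within `λ ℓ(J)` of one of two values determined by `x` and `J`. Among the multiples of
the step in a range at least comparable to `ℓ(J)`, only a fraction `O(λ)` does so, because the step
is at most `λ ℓ(J)`; the union bound over the coordinates costs a factor `n`. Integrating this
pointwise count against the measure (Tonelli) bounds the average.
-/

lemma two_pow_toNat_sub_mul_zpow_neg {M : ℕ} {N : ℤ} (hNM : N ≤ M) :
    ((2 ^ (M - N).toNat : ℕ) : ℝ) * (2 : ℝ) ^ (-(M : ℤ)) = (2 : ℝ) ^ (-N) := by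
  rw [Nat.cast_pow, Nat.cast_ofNat, ← zpow_natCast, Int.toNat_of_nonneg (sub_nonneg.2 hNM),
    ← zpow_add₀ two_ne_zero]
  congr 1
  ring

lemma frontier_iInter_subset {X ι : Type*} [TopologicalSpace X] [Finite ι] (s : ι → Set X) :
    frontier (⋂ i, s i) ⊆ ⋃ i, frontier (s i) := by
  rintro x ⟨hclosure, hinterior⟩
  rw [interior_iInter_of_finite, mem_iInter, not_forall] at hinterior
  obtain ⟨i, hi⟩ := hinterior
  exact mem_iUnion.2 ⟨i, closure_mono (iInter_subset s i) hclosure, hi⟩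

section Counting

open scoped Finset

lemma sum_measure_inter_le_mul {α ι : Type*} [MeasurableSpace α] [Fintype ι] (μ : Measure α)
    (A : Set α) {T : ι → Set α} (hT : ∀ i, MeasurableSet (T i)) {D : ℝ≥0∞}
    (hD : ∀ x, (#{i | x ∈ T i} : ℝ≥0∞) ≤ D) :
    ∑ i, μ (A ∩ T i) ≤ D * μ A := by
  have sum_indicator_eq_card (x : α) :
      ∑ i, (T i).indicator (1 : α → ℝ≥0∞) x = #{i | x ∈ T i} := by
    simp [indicator_apply]
  calc ∑ i, μ (A ∩ T i) = ∑ i, ∫⁻ x in A, (T i).indicator 1 x ∂μ := by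
        simp only [lintegral_indicator_one (hT _), Measure.restrict_apply (hT _), inter_comm]
    _ = ∫⁻ x in A, ∑ i, (T i).indicator 1 x ∂μ :=
        (lintegral_finsetSum _ fun i _ => measurable_one.indicator (hT i)).symm
    _ ≤ ∫⁻ _ in A, D ∂μ := lintegral_mono fun x => (sum_indicator_eq_card x).trans_le (hD x)
    _ = D * μ A := setLIntegral_const A D

lemma card_exists_apply_le {ι κ : Type*} [DecidableEq ι] [Fintype ι] [Fintype κ]
    (P : ι → κ → Prop) [∀ i, DecidablePred (P i)]
    [DecidablePred fun f : ι → κ => ∃ i, P i (f i)] {p : ℝ}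
    (hP : ∀ i, (#{k | P i k} : ℝ) ≤ p * Fintype.card κ) :
    (#{f : ι → κ | ∃ i, P i (f i)} : ℝ) ≤
      Fintype.card ι * p * (Fintype.card κ : ℝ) ^ Fintype.card ι := by
  have card_apply (i : ι) :
      #{f : ι → κ | P i (f i)} = Fintype.card κ ^ (Fintype.card ι - 1) * #{k | P i k} := by
    simpa only [Finset.card_filter, Fintype.piFinset_univ, Finset.card_univ, smul_eq_mul] using
      Fintype.sum_piFinset_apply (fun k => if P i k then (1 : ℕ) else 0) Finset.univ i
  have card_apply_le (i : ι) :
      (#{f : ι → κ | P i (f i)} : ℝ) ≤ p * (Fintype.card κ : ℝ) ^ Fintype.card ι :=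
    calc (#{f : ι → κ | P i (f i)} : ℝ)
        = (Fintype.card κ : ℝ) ^ (Fintype.card ι - 1) * #{k | P i k} := mod_cast card_apply i
      _ ≤ (Fintype.card κ : ℝ) ^ (Fintype.card ι - 1) * (p * Fintype.card κ) := by
        gcongr
        exact hP i
      _ = p * (Fintype.card κ : ℝ) ^ Fintype.card ι := by
        rw [← pow_sub_one_mul (Fintype.card_pos_iff.2 ⟨i⟩).ne']
        ring
  have union_bound : #{f : ι → κ | ∃ i, P i (f i)} ≤ ∑ i, #{f : ι → κ | P i (f i)} :=
    (Finset.card_le_card fun f => by simp).trans Finset.card_biUnion_le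
  calc (#{f : ι → κ | ∃ i, P i (f i)} : ℝ) ≤ ∑ i, (#{f : ι → κ | P i (f i)} : ℝ) :=
        mod_cast union_bound
    _ ≤ ∑ _ : ι, p * (Fintype.card κ : ℝ) ^ Fintype.card ι :=
        Finset.sum_le_sum fun i _ => card_apply_le i
    _ = Fintype.card ι * p * (Fintype.card κ : ℝ) ^ Fintype.card ι := by
        rw [Finset.sum_const, Finset.card_univ, nsmul_eq_mul, mul_assoc]

lemma card_abs_sub_mul_le {K : ℕ} {h r : ℝ} (hh : 0 < h) (hr : h ≤ r) (a : ℝ) :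
    (#{k : Fin K | |a - k * h| ≤ r} : ℝ) ≤ 3 * (r / h) := by
  have card_le : #{k : Fin K | |a - k * h| ≤ r} ≤ #(Finset.Icc ⌈(a - r) / h⌉ ⌊(a + r) / h⌋) := by
    refine Finset.card_le_card_of_injOn (fun k : Fin K => ((k : ℕ) : ℤ)) (fun k hk => ?_)
      fun k _ k' _ hkk' => Fin.ext (Int.ofNat_inj.1 hkk')
    simp only [Finset.coe_filter, Finset.mem_univ, true_and, mem_ofPred_eq, abs_le] at hk
    simp only [Finset.coe_Icc, mem_Icc, Int.ceil_le, Int.le_floor, Int.cast_natCast,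
      div_le_iff₀ hh, le_div_iff₀ hh]
    constructor <;> linarith
  have one_le : 1 ≤ r / h := (one_le_div hh).2 hr
  calc (#{k : Fin K | |a - k * h| ≤ r} : ℝ)
      ≤ ((⌊(a + r) / h⌋ + 1 - ⌈(a - r) / h⌉).toNat : ℤ) := by
        exact_mod_cast card_le.trans_eq (Int.card_Icc _ _)
    _ = max ((⌊(a + r) / h⌋ : ℝ) + 1 - ⌈(a - r) / h⌉) 0 := by
        rw [Int.toNat_eq_max]
        push_cast
        rfl
    _ ≤ 3 * (r / h) := by
        refine max_le ?_ (by linarith)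
        have length_eq : (a + r) / h - (a - r) / h = 2 * (r / h) := by ring
        linarith [Int.floor_le ((a + r) / h), Int.le_ceil ((a - r) / h)]

end Counting

namespace Cube

open scoped Finset

variable {n : ℕ}

/-- The inner boundary shell `Q ∖ Q_λ` of width `λ ℓ(Q)`. -/
def shell (Q : Cube n) (lam : ℝ) : Set (Pt n) := Q.set \ Q.inn lam

lemma set_eq_iInter (Q : Cube n) :
    Q.set = ⋂ i, (fun x : Pt n => x i) ⁻¹' Ico (Q.c i) (Q.c i + Q.l) := by
  ext x
  simp [set]

lemma measurableSet_shell (Q : Cube n) (lam : ℝ) : MeasurableSet (Q.shell lam) := by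
  have hset : MeasurableSet Q.set := by
    rw [set_eq_iInter]
    exact .iInter fun i => measurableSet_Ico.preimage (by fun_prop)
  exact hset.diff <| hset.inter <|
    measurableSet_lt measurable_const (Metric.continuous_infDist_pt _).measurable

lemma child_set_subset (Q : Cube n) (e : Fin n → Bool) : (Q.child e).set ⊆ Q.set := by
  intro x hx i
  have hxi := hx i
  have := Q.lpos
  simp only [child] at hxi
  split_ifs at hxi <;> constructor <;> linarith

lemma frontier_nonempty (hn : 0 < n) (Q : Cube n) : (frontier Q.set).Nonempty := by
  have corner_mem : Q.c ∈ Q.set := fun i => ⟨le_rfl, lt_add_of_pos_right _ Q.lpos⟩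
  refine nonempty_frontier_iff.2 ⟨⟨Q.c, corner_mem⟩, fun huniv => ?_⟩
  have opposite_mem : WithLp.toLp 2 (fun i => Q.c i + Q.l) ∈ Q.set := huniv ▸ mem_univ _
  exact (opposite_mem ⟨0, hn⟩).2.false

lemma exists_apply_eq_of_mem_frontier {Q : Cube n} {y : Pt n} (hy : y ∈ frontier Q.set) :
    ∃ i, y i = Q.c i ∨ y i = Q.c i + Q.l := by
  rw [set_eq_iInter] at hy
  obtain ⟨i, hi⟩ := mem_iUnion.1 (frontier_iInter_subset _ hy)
  have continuous_apply : Continuous fun x : Pt n => x i := by fun_prop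
  have hyi := continuous_apply.frontier_preimage_subset _ hi
  rw [frontier_Ico (lt_add_of_pos_right _ Q.lpos)] at hyi
  exact ⟨i, hyi⟩

lemma exists_abs_sub_le_of_mem_shell (hn : 0 < n) {Q : Cube n} {lam : ℝ} {x : Pt n}
    (hx : x ∈ Q.shell lam) :
    ∃ i, |x i - Q.c i| ≤ lam * Q.l ∨ |x i - (Q.c i + Q.l)| ≤ lam * Q.l := by
  obtain ⟨y, hy, hxy⟩ := isClosed_frontier.exists_infDist_eq_dist (Q.frontier_nonempty hn) x
  have dist_le : dist x y ≤ lam * Q.l := hxy ▸ not_lt.1 fun hlt => hx.2 ⟨hx.1, hlt⟩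
  have abs_sub_le (i : Fin n) : |x i - y i| ≤ lam * Q.l :=
    (PiLp.norm_apply_le (x - y) i).trans ((dist_eq_norm x y).symm.trans_le dist_le)
  obtain ⟨i, hi | hi⟩ := exists_apply_eq_of_mem_frontier hy
  · exact ⟨i, .inl (hi ▸ abs_sub_le i)⟩
  · exact ⟨i, .inr (hi ▸ abs_sub_le i)⟩

lemma card_mem_shell_trans_le (hn : 0 < n) (J : Cube n) {lam B : ℝ} {M K : ℕ}
    (hstep : (2 : ℝ) ^ (-(M : ℤ)) ≤ lam * J.l) (hrange : J.l ≤ B * (K * (2 : ℝ) ^ (-(M : ℤ))))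
    (x : Pt n) :
    (#{idx : Fin n → Fin K | x ∈ (J.trans (gamOf M idx)).shell lam} : ℝ) ≤
      n * (6 * B * lam) * (K : ℝ) ^ n := by
  set h : ℝ := (2 : ℝ) ^ (-(M : ℤ))
  have hh : 0 < h := by positivity
  have hlam : 0 < lam := pos_of_mul_pos_left (hh.trans_le hstep) J.lpos.le
  let near (a : ℝ) (k : Fin K) : Prop := |a - k * h| ≤ lam * J.l
  let nearFace (i : Fin n) (k : Fin K) : Prop :=
    near (x i - J.c i) k ∨ near (x i - J.c i - J.l) k
  have card_near (a : ℝ) : (#{k | near a k} : ℝ) ≤ 3 * (lam * (B * K)) :=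
    calc (#{k | near a k} : ℝ) ≤ 3 * (lam * J.l / h) := card_abs_sub_mul_le hh hstep a
      _ = 3 * (lam * (J.l / h)) := by rw [mul_div_assoc]
      _ ≤ 3 * (lam * (B * K)) := by
        gcongr
        rwa [div_le_iff₀ hh, mul_assoc]
  have card_nearFace (i : Fin n) : (#{k | nearFace i k} : ℝ) ≤ 6 * B * lam * K :=
    calc (#{k | nearFace i k} : ℝ)
        ≤ #{k | near (x i - J.c i) k} + #{k | near (x i - J.c i - J.l) k} := by
          rw [Finset.filter_or]
          exact_mod_cast Finset.card_union_le _ _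
      _ ≤ 3 * (lam * (B * K)) + 3 * (lam * (B * K)) := add_le_add (card_near _) (card_near _)
      _ = 6 * B * lam * K := by ring
  have exists_nearFace (idx : Fin n → Fin K) (hx : x ∈ (J.trans (gamOf M idx)).shell lam) :
      ∃ i, nearFace i (idx i) := by
    refine (exists_abs_sub_le_of_mem_shell hn hx).imp fun i hi => ?_
    convert hi using 3 <;> simp only [trans, gamOf] <;> ring
  calc (#{idx : Fin n → Fin K | x ∈ (J.trans (gamOf M idx)).shell lam} : ℝ)
      ≤ #{idx : Fin n → Fin K | ∃ i, nearFace i (idx i)} := by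
        exact_mod_cast Finset.card_le_card <|
          Finset.monotone_filter_right _ fun idx _ => exists_nearFace idx
    _ ≤ n * (6 * B * lam) * (K : ℝ) ^ n := by
        simpa only [Fintype.card_fin] using
          card_exists_apply_le nearFace (p := 6 * B * lam)
            (by simpa only [Fintype.card_fin] using card_nearFace)

end Cube

theorem averagedShellThinness_general {n : ℕ} (hn : 0 < n) (ω : Measure (Pt n)) (A : Set (Pt n))
    (J : Cube n) {lam B : ℝ} {M K : ℕ} (hstep : (2 : ℝ) ^ (-(M : ℤ)) ≤ lam * J.l)
    (hrange : J.l ≤ B * (K * (2 : ℝ) ^ (-(M : ℤ)))) :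
    (∑ idx : Fin n → Fin K, ω (A ∩ (J.trans (gamOf M idx)).shell lam)) /
        (Fintype.card (Fin n → Fin K) : ℝ≥0∞)
      ≤ ENNReal.ofReal (n * (6 * B) * lam) * ω A := by
  set m : ℕ := Fintype.card (Fin n → Fin K) with m_def
  refine ENNReal.div_le_of_le_mul ?_
  calc ∑ idx : Fin n → Fin K, ω (A ∩ (J.trans (gamOf M idx)).shell lam)
      ≤ ENNReal.ofReal (n * (6 * B * lam) * (K : ℝ) ^ n) * ω A := by
        refine sum_measure_inter_le_mul ω A (fun idx => Cube.measurableSet_shell _ _) fun x => ?_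
        rw [← ENNReal.ofReal_natCast]
        exact ENNReal.ofReal_le_ofReal (J.card_mem_shell_trans_le hn hstep hrange x)
    _ = ENNReal.ofReal (n * (6 * B) * lam * m) * ω A := by
        simp only [m_def, Fintype.card_fun, Fintype.card_fin, Nat.cast_pow, mul_assoc]
    _ = ENNReal.ofReal (n * (6 * B) * lam) * ω A * m := by
        rw [ENNReal.ofReal_mul' (Nat.cast_nonneg m), ENNReal.ofReal_natCast, mul_right_comm]

/-- **Averaged thinness of boundary shells.** Let `ω` be locally finite, `R, J` cubes with
`2^{-ρ}ℓ(R) ≤ ℓ(J) ≤ 2^{ρ}ℓ(R)` and `J ⊂ 3R`, `λ ∈ (0,1/2)`, and `J'` a dyadic child of `J`.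
Averaging over the translation parameterization of dyadic grids (translations of step `2^{-M}`
bounded by `2^{-N}`),
`𝔼_Ω ω(R ∩ [(J+γ)' ∖ (J+γ)_λ]) ≤ C_ρ λ ω(R)`, where `C_ρ` depends only on `n` and `ρ`. -/
theorem averagedShellThinness (n ρ : ℕ) (hn : 0 < n) :
    ∃ C : ℝ, 0 < C ∧
      ∀ ω : Measure (Pt n), IsLocallyFiniteMeasure ω →
      ∀ R J : Cube n, (2:ℝ) ^ (-(ρ:ℤ)) * R.l ≤ J.l → J.l ≤ (2:ℝ) ^ (ρ:ℤ) * R.l →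
      J.set ⊆ R.tri.set →
      ∀ lam : ℝ, 0 < lam → lam < 1/2 →
      ∀ e : Fin n → Bool,
      ∀ (M : ℕ) (N : ℤ), N < 0 →
      (2:ℝ) ^ (-(M:ℤ)) ≤ lam * J.l → R.l ≤ (2:ℝ) ^ (-N) →
      (∑ idx : Fin n → Fin (2 ^ ((M - N).toNat)),
            ω (R.set ∩ (((J.trans (gamOf M idx)).child e).set \ (J.trans (gamOf M idx)).inn lam))) /
          (Fintype.card (Fin n → Fin (2 ^ ((M - N).toNat))) : ℝ≥0∞)
        ≤ ENNReal.ofReal (C * lam) * ω R.set := by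
  refine ⟨n * (6 * 2 ^ (ρ : ℤ)), by positivity, fun ω _ R J _ hJR _ lam _ _ e M N hN hM hRN => ?_⟩
  have hrange : J.l ≤ 2 ^ (ρ : ℤ) * ((2 ^ (M - N).toNat : ℕ) * (2 : ℝ) ^ (-(M : ℤ))) := by
    rw [two_pow_toNat_sub_mul_zpow_neg (by omega)]
    exact hJR.trans (by gcongr)
  refine le_trans ?_ (averagedShellThinness_general hn ω R.set J hM hrange)
  unfold Cube.shell
  gcongr
  exact Cube.child_set_subset _ e
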